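/- Under the stated hypotheses on G, the eigenvector x satisfies x_k > x_0 and x_k > x_1. -/

import Mathlib

open Matrix

/-- The signless Laplacian `Q(G) = D(G) + A(G)` of a finite simple graph `G`. -/
noncomputable def signlessLaplacian {V : Type*} [Fintype V] (G : SimpleGraph V) :
    Matrix V V ℝ :=
  letI := Classical.decEq V
  letI : DecidableRel G.Adj := Classical.decRel _
  Matrix.diagonal (fun v => (G.degree v : ℝ)) + G.adjMatrix ℝ

/-- The `Q`-index of `G`: the largest eigenvalue of the signless Laplacian `Q(G)`. -/
noncomputable def qIndex {V : Type*} [Fintype V] (G : SimpleGraph V) : ℝ :=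
  letI := Classical.decEq V
  sSup (spectrum ℝ (signlessLaplacian G))

/-!
Let `x > 0` satisfy `Q x = q x`, so that `(q - d(v)) x_v` is the sum of `x` over the neighbours of
`v`. Apart from `v₀`, the neighbours of `v₁` are all neighbours of `v_k`, which has larger degree.
The one missing term `x₀` costs at most `x₁`, because the closed neighbourhood of `v₀` lies in that
of `v₁` and hence `x₀ ≤ x₁`; the gap between the degrees of `v₁` and `v_k` pays for it.
-/

theorem degree_le_three_of_neighborSet_eq {V : Type*} {G : SimpleGraph V} {v a b c : V}
    [Fintype (G.neighborSet v)] (h : G.neighborSet v = {a, b, c}) : G.degree v ≤ 3 := by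
  classical
  have hnbr : G.neighborFinset v = {a, b, c} := by simp [← Finset.coe_inj, h]
  rw [← G.card_neighborFinset_eq_degree, hnbr]
  exact Finset.card_le_three

theorem degree_eq_of_neighborSet_eq_setOf_le_ne {n m : ℕ} {G : SimpleGraph (Fin n)} {v : Fin n}
    [Fintype (G.neighborSet v)] (hmv : m ≤ v.val)
    (h : G.neighborSet v = {u : Fin n | m ≤ u.val ∧ u ≠ v}) : G.degree v = n - m - 1 := by
  have hnbr : G.neighborFinset v = (Finset.Ici ⟨m, hmv.trans_lt v.isLt⟩).erase v := by
    ext i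
    simpa [Fin.le_def, and_comm] using Set.ext_iff.mp h i
  rw [← G.card_neighborFinset_eq_degree, hnbr,
    Finset.card_erase_of_mem (Finset.mem_Ici.mpr (Fin.le_def.mpr hmv)), Fin.card_Ici]

section SignlessLaplacian

variable {V : Type*} [Fintype V] {G : SimpleGraph V} [DecidableRel G.Adj]
  {q : ℝ} {x : V → ℝ} {u v w : V}

theorem signlessLaplacian_mulVec_apply (x : V → ℝ) (v : V) :
    (signlessLaplacian G *ᵥ x) v = G.degree v * x v + ∑ u ∈ G.neighborFinset v, x u := by
  classical
  simp only [signlessLaplacian, add_mulVec, Pi.add_apply, mulVec_diagonal,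
    SimpleGraph.adjMatrix_mulVec_apply]
  convert rfl

theorem sum_neighborFinset_eq_of_signlessLaplacian_mulVec_eq
    (heig : signlessLaplacian G *ᵥ x = q • x) (v : V) :
    ∑ u ∈ G.neighborFinset v, x u = (q - G.degree v) * x v := by
  have hv := congrFun heig v
  rw [signlessLaplacian_mulVec_apply, Pi.smul_apply, smul_eq_mul] at hv
  linarith

theorem degree_lt_of_signlessLaplacian_mulVec_eq (hpos : ∀ i, 0 < x i)
    (heig : signlessLaplacian G *ᵥ x = q • x) (hv : 0 < G.degree v) : (G.degree v : ℝ) < q := by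
  have hsum : 0 < (q - G.degree v) * x v := by
    rw [← sum_neighborFinset_eq_of_signlessLaplacian_mulVec_eq heig]
    exact Finset.sum_pos (fun i _ => hpos i) (Finset.card_pos.mp hv)
  exact sub_pos.mp (pos_of_mul_pos_left hsum (hpos v).le)

omit [DecidableRel G.Adj] in
theorem apply_le_apply_of_adj_of_neighborSet_diff_subset (hpos : ∀ i, 0 < x i)
    (heig : signlessLaplacian G *ᵥ x = q • x) (hadj : G.Adj u v)
    (hsub : G.neighborSet u \ {v} ⊆ G.neighborSet v) : x u ≤ x v := by
  classical
  have hsub' : (G.neighborFinset u).erase v ⊆ (G.neighborFinset v).erase u := fun i hi => by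
    obtain ⟨hiv, hui⟩ := Finset.mem_erase.mp hi
    rw [SimpleGraph.mem_neighborFinset] at hui
    simpa [hui.ne'] using hsub ⟨hui, hiv⟩
  have hv_mem : v ∈ G.neighborFinset u := by simpa using hadj
  have hu_mem : u ∈ G.neighborFinset v := by simpa using hadj.symm
  have hdeg : (G.degree u : ℝ) ≤ G.degree v := by
    have hcard := Finset.card_le_card hsub'
    rw [Finset.card_erase_of_mem hv_mem, Finset.card_erase_of_mem hu_mem] at hcard
    exact_mod_cast (Nat.sub_le_sub_iff_right (Finset.card_pos.mpr ⟨u, hu_mem⟩)).mp hcard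
  have hlt := degree_lt_of_signlessLaplacian_mulVec_eq hpos heig (Finset.card_pos.mpr ⟨u, hu_mem⟩)
  have hsum := Finset.sum_le_sum_of_subset_of_nonneg hsub' fun i _ _ => (hpos i).le
  rw [Finset.sum_erase_eq_sub hv_mem, Finset.sum_erase_eq_sub hu_mem,
    sum_neighborFinset_eq_of_signlessLaplacian_mulVec_eq heig,
    sum_neighborFinset_eq_of_signlessLaplacian_mulVec_eq heig] at hsum
  have hmul : (q - G.degree v + 1) * x u ≤ (q - G.degree v + 1) * x v := calc
    (q - G.degree v + 1) * x u ≤ (q - G.degree u + 1) * x u := by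
      gcongr
      exact (hpos u).le
    _ ≤ (q - G.degree v + 1) * x v := by linarith
  exact le_of_mul_le_mul_left hmul (by linarith)

theorem apply_lt_apply_of_neighborSet_diff_subset_of_degree_lt (hpos : ∀ i, 0 < x i)
    (heig : signlessLaplacian G *ᵥ x = q • x) (hwu : x w ≤ x u)
    (hsub : G.neighborSet u \ {w} ⊆ G.neighborSet v) (hdeg : G.degree u < G.degree v) :
    x u < x v := by
  classical
  have hsub' : (G.neighborFinset u).erase w ⊆ G.neighborFinset v := fun i hi => by
    simpa using hsub (show i ∈ G.neighborSet u \ {w} by simpa [and_comm] using hi)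
  have hsum_lt : ∑ i ∈ (G.neighborFinset u).erase w, x i < ∑ i ∈ G.neighborFinset v, x i := by
    obtain ⟨j, hjv, hju⟩ := Finset.exists_mem_notMem_of_card_lt_card
      ((Finset.card_le_card (Finset.erase_subset w _)).trans_lt hdeg)
    exact Finset.sum_lt_sum_of_subset hsub' hjv hju (hpos j) fun i _ _ => (hpos i).le
  have hsum_u : ∑ i ∈ G.neighborFinset u, x i ≤ x w + ∑ i ∈ (G.neighborFinset u).erase w, x i := by
    by_cases hw : w ∈ G.neighborFinset u
    · exact (Finset.add_sum_erase _ _ hw).ge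
    · rw [Finset.erase_eq_of_notMem hw]
      exact le_add_of_nonneg_left (hpos w).le
  rw [sum_neighborFinset_eq_of_signlessLaplacian_mulVec_eq heig] at hsum_lt hsum_u
  have hdeg' : (G.degree u : ℝ) + 1 ≤ G.degree v := by exact_mod_cast hdeg
  have hmul : (q - G.degree v) * x u < (q - G.degree v) * x v := calc
    (q - G.degree v) * x u ≤ (q - (G.degree u + 1)) * x u := by
      gcongr
      exact (hpos u).le
    _ < (q - G.degree v) * x v := by linarith
  have hlt := degree_lt_of_signlessLaplacian_mulVec_eq hpos heig (Nat.zero_lt_of_lt hdeg)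
  exact lt_of_mul_lt_mul_left hmul (sub_pos.mpr hlt).le

theorem stmt_7_general (hpos : ∀ i, 0 < x i) (heig : signlessLaplacian G *ᵥ x = q • x)
    (hadj : G.Adj u v) (huv : G.neighborSet u \ {v} ⊆ G.neighborSet v)
    (hvw : G.neighborSet v \ {u} ⊆ G.neighborSet w) (hdeg : G.degree v < G.degree w) :
    x u < x w ∧ x v < x w := by
  have hle : x u ≤ x v := apply_le_apply_of_adj_of_neighborSet_diff_subset hpos heig hadj huv
  have hlt : x v < x w :=
    apply_lt_apply_of_neighborSet_diff_subset_of_degree_lt hpos heig hle hvw hdeg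
  exact ⟨hle.trans_lt hlt, hlt⟩

end SignlessLaplacian

/-- for the maximal outer-planar graph of type `D_1` with `Δ = n - 3`,
the Perron eigenvector satisfies `x_k > x_0` and `x_k > x_1`. -/
theorem stmt_7 (n k : ℕ) (hn : 7 ≤ n) (hk1 : 4 ≤ k) (hk2 : k ≤ n - 3)
    (G : SimpleGraph (Fin n))
    (h0 : G.neighborSet ⟨0, by omega⟩ = {⟨1, by omega⟩, ⟨n - 1, by omega⟩})
    (h1 : G.neighborSet ⟨1, by omega⟩ =
      {⟨0, by omega⟩, ⟨2, by omega⟩, ⟨n - 1, by omega⟩})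
    (h2 : G.neighborSet ⟨2, by omega⟩ =
      {⟨1, by omega⟩, ⟨3, by omega⟩, ⟨k, by omega⟩, ⟨n - 1, by omega⟩})
    (hlast : G.neighborSet ⟨n - 1, by omega⟩ =
      {⟨0, by omega⟩, ⟨1, by omega⟩, ⟨2, by omega⟩, ⟨k, by omega⟩, ⟨n - 2, by omega⟩})
    (hk' : G.neighborSet ⟨k, by omega⟩ =
      {u : Fin n | 2 ≤ u.val ∧ u ≠ ⟨k, by omega⟩})
    (x : Fin n → ℝ) (hpos : ∀ i, 0 < x i)
    (heig : (signlessLaplacian G).mulVec x = qIndex G • x) :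
    x ⟨0, by omega⟩ < x ⟨k, by omega⟩ ∧ x ⟨1, by omega⟩ < x ⟨k, by omega⟩ := by
  classical
  have hdeg : G.degree ⟨1, by omega⟩ < G.degree ⟨k, by omega⟩ := by
    have hdeg_one := degree_le_three_of_neighborSet_eq h1
    have hdeg_k := degree_eq_of_neighborSet_eq_setOf_le_ne (by simp only; omega) hk'
    omega
  refine stmt_7_general hpos heig (h0.ge (Set.mem_insert _ _)) ?_ ?_ hdeg
  · rw [h0, h1]
    grind
  · rw [h1, hk']
    rintro i ⟨rfl | rfl | rfl, hi⟩ <;> grind
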